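/- arXiv:2207.02047 — 4 statements merged into one kernel-verified Lean document; each statement's English description precedes it below -/
import Mathlib

section
/- Let n ≥ 1 and let f = g + h in the polynomial ring ℂ[x₁,…,xₙ], where g is homogeneous of degree d for some d ≥ 3, the only common zero in ℂⁿ of the partial derivatives ∂g/∂x₁, …, ∂g/∂xₙ is the origin, h is homogeneous of degree d+1, and h does not belong to the Jacobian ideal Jac(g). Then the image of f in the formal power series ring ℂ[[x₁,…,xₙ]] does not belong to the ideal of ℂ[[x₁,…,xₙ]] generated by the images of ∂f/∂x₁, …, ∂f/∂xₙ. -/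
open MvPolynomial

/-!
Compare the homogeneous parts of a relation `g + h = ∑ aᵢ ∂ᵢ(g + h)`. If the `∂ᵢg` have no linear
syzygies, then degree `d - 1` forces the constant terms of the `aᵢ` to vanish and, by Euler's
identity, degree `d` forces the linear part of `aᵢ` to be `xᵢ / d`. Degree `d + 1` then reads
`h = ∑ aᵢ⁽²⁾ ∂ᵢg + ((d + 1) / d) h`, so `h ∈ Jac(g)`.

A linear syzygy is a linear vector field `A` annihilating `g`, so `g` is invariant under the flow
`exp(tA)`, `t ∈ ℂ`. Compactness of the sphere makes `‖∇g(x)‖` comparable to `‖x‖ ^ (d - 1)`, and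
differentiating `g ∘ M = g` turns this into `‖M‖ ^ (d - 1) ≤ K ‖M⁻¹‖` for every `M` preserving `g`.
Applied to `M` and `M⁻¹` with `d - 1 ≥ 2`, this bounds `‖M‖`. Hence `t ↦ exp(tA)` is a bounded
entire function, and `A = 0` by Liouville's theorem.
-/

section HomogeneousGrowth

variable {𝕜 E F : Type*} [RCLike 𝕜] [NormedAddCommGroup E] [NormedSpace 𝕜 E]
  [NormedAddCommGroup F] [NormedSpace 𝕜 F] {P : E → F} {e : ℕ}

lemma norm_eq_pow_mul_norm_normalize (hP : ∀ (c : 𝕜) x, P (c • x) = c ^ e • P x) (x : E) :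
    ‖P x‖ = ‖x‖ ^ e * ‖P ((‖x‖⁻¹ : 𝕜) • x)‖ := by
  rcases eq_or_ne x 0 with rfl | hx
  · have h0 := congrArg norm (hP 0 0)
    simpa [norm_smul] using h0
  · rw [hP, norm_smul, ← mul_assoc, norm_pow, norm_inv, RCLike.norm_ofReal, abs_norm,
      ← mul_pow, mul_inv_cancel₀ (norm_ne_zero_iff.mpr hx), one_pow, one_mul]

lemma normalize_mem_sphere {x : E} (hx : x ≠ 0) : (‖x‖⁻¹ : 𝕜) • x ∈ Metric.sphere (0 : E) 1 :=
  mem_sphere_zero_iff_norm.mpr (norm_smul_inv_norm hx)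

variable [ProperSpace E]

lemma exists_norm_le_mul_norm_pow (he : e ≠ 0) (hcont : Continuous P)
    (hP : ∀ (c : 𝕜) x, P (c • x) = c ^ e • P x) :
    ∃ C, 0 ≤ C ∧ ∀ x, ‖P x‖ ≤ C * ‖x‖ ^ e := by
  obtain ⟨C, hC⟩ := (isCompact_sphere (0 : E) 1).exists_bound_of_continuousOn hcont.continuousOn
  refine ⟨max C 0, le_max_right _ _, fun x => ?_⟩
  rw [norm_eq_pow_mul_norm_normalize hP, mul_comm]
  rcases eq_or_ne x 0 with rfl | hx
  · simp [he]
  · gcongr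
    exact (hC _ (normalize_mem_sphere hx)).trans (le_max_left _ _)

lemma exists_mul_norm_pow_le_norm (he : e ≠ 0) (hcont : Continuous P)
    (hP : ∀ (c : 𝕜) x, P (c • x) = c ^ e • P x) (hzero : ∀ x, P x = 0 → x = 0) :
    ∃ c, 0 < c ∧ ∀ x, c * ‖x‖ ^ e ≤ ‖P x‖ := by
  have hpos : ∀ u ∈ Metric.sphere (0 : E) 1, 0 < ‖P u‖ := fun u hu =>
    norm_pos_iff.mpr fun h => Metric.ne_of_mem_sphere hu one_ne_zero (hzero u h)
  obtain ⟨c, hc, hle⟩ :=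
    (isCompact_sphere (0 : E) 1).exists_forall_le' hcont.norm.continuousOn hpos
  refine ⟨c, hc, fun x => ?_⟩
  rw [norm_eq_pow_mul_norm_normalize hP, mul_comm]
  rcases eq_or_ne x 0 with rfl | hx
  · simp [he]
  · gcongr
    exact hle _ (normalize_mem_sphere hx)

end HomogeneousGrowth

lemma le_max_one_of_pow_le_mul {e : ℕ} (he : 2 ≤ e) {a b K : ℝ} (hK : 0 ≤ K)
    (hab : a ^ e ≤ K * b) (hba : b ^ e ≤ K * a) : a ≤ max 1 K := by
  set m := max a b with hm
  have hpow : m ^ e ≤ K * m := by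
    rcases max_choice a b with h | h
    · rw [hm, h]; exact hab.trans (by gcongr; exact h ▸ le_max_right a b)
    · rw [hm, h]; exact hba.trans (by gcongr; exact h ▸ le_max_left a b)
  refine (le_max_left a b).trans ?_
  rcases le_total m 1 with h1 | h1
  · exact h1.trans (le_max_left _ _)
  · have hsq : m * m ≤ K * m := by
      rw [← sq]; exact (pow_le_pow_right₀ h1 he).trans hpow
    exact (le_of_mul_le_mul_right hsq (by linarith)).trans (le_max_right _ _)

lemma opNorm_pow_le_of_forall {𝕜 E F : Type*} [NontriviallyNormedField 𝕜]
    [SeminormedAddCommGroup E] [NormedSpace 𝕜 E] [SeminormedAddCommGroup F] [NormedSpace 𝕜 F]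
    {e : ℕ} (he : e ≠ 0) {M : E →L[𝕜] F} {K : ℝ} (hK : 0 ≤ K)
    (hM : ∀ x, ‖M x‖ ^ e ≤ K * ‖x‖ ^ e) : ‖M‖ ^ e ≤ K := by
  have hroot : (K ^ (e⁻¹ : ℝ)) ^ e = K := Real.rpow_inv_natCast_pow hK he
  rw [← hroot]
  gcongr
  refine M.opNorm_le_bound (by positivity) fun x => ?_
  refine le_of_pow_le_pow_left₀ he (by positivity) ?_
  rw [mul_pow, hroot]
  exact hM x

section Stabilizer

variable {𝕜 E F : Type*} [RCLike 𝕜] [NormedAddCommGroup E] [NormedSpace 𝕜 E]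
  [NormedAddCommGroup F] [NormedSpace 𝕜 F] {G : E → F}

lemma fderiv_apply_eq_fderiv_comp_inv (hG : Differentiable 𝕜 G) (M : (E →L[𝕜] E)ˣ)
    (hM : ∀ x, G (M.1 x) = G x) (x : E) :
    fderiv 𝕜 G (M.1 x) = (fderiv 𝕜 G x).comp M⁻¹.1 := by
  have hchain : (fderiv 𝕜 G (M.1 x)).comp M.1 = fderiv 𝕜 G x := by
    have hcomp := (hG (M.1 x)).hasFDerivAt.comp x M.1.hasFDerivAt
    rw [show G ∘ M.1 = G from funext hM] at hcomp
    exact hcomp.fderiv.symm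
  rw [← hchain, ContinuousLinearMap.comp_assoc, ← ContinuousLinearMap.mul_def, Units.mul_inv,
    ContinuousLinearMap.one_def, ContinuousLinearMap.comp_id]

theorem exists_norm_le_of_forall_apply_eq [ProperSpace E] {e : ℕ} (he : 2 ≤ e) (hG : ContDiff 𝕜 1 G)
    (hhom : ∀ (c : 𝕜) x, fderiv 𝕜 G (c • x) = c ^ e • fderiv 𝕜 G x)
    (hcrit : ∀ x, fderiv 𝕜 G x = 0 → x = 0) :
    ∃ K, ∀ M : (E →L[𝕜] E)ˣ, (∀ x, G (M.1 x) = G x) → ‖M.1‖ ≤ K := by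
  have he0 : e ≠ 0 := by omega
  have hcont := hG.continuous_fderiv one_ne_zero
  obtain ⟨C, hC0, hC⟩ := exists_norm_le_mul_norm_pow he0 hcont hhom
  obtain ⟨c, hc0, hc⟩ := exists_mul_norm_pow_le_norm he0 hcont hhom hcrit
  have hinv : ∀ M : (E →L[𝕜] E)ˣ, (∀ x, G (M.1 x) = G x) → ‖M.1‖ ^ e ≤ C / c * ‖M⁻¹.1‖ := by
    intro M hM
    refine opNorm_pow_le_of_forall he0 (by positivity) fun x => ?_
    have hbound : c * ‖M.1 x‖ ^ e ≤ C * ‖x‖ ^ e * ‖M⁻¹.1‖ := calc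
      c * ‖M.1 x‖ ^ e ≤ ‖fderiv 𝕜 G (M.1 x)‖ := hc _
      _ = ‖(fderiv 𝕜 G x).comp M⁻¹.1‖ := by
        rw [fderiv_apply_eq_fderiv_comp_inv (hG.differentiable one_ne_zero) M hM]
      _ ≤ ‖fderiv 𝕜 G x‖ * ‖M⁻¹.1‖ := ContinuousLinearMap.opNorm_comp_le _ _
      _ ≤ C * ‖x‖ ^ e * ‖M⁻¹.1‖ := by gcongr; exact hC x
    calc ‖M.1 x‖ ^ e ≤ C * ‖x‖ ^ e * ‖M⁻¹.1‖ / c := by rwa [le_div_iff₀' hc0]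
      _ = C / c * ‖M⁻¹.1‖ * ‖x‖ ^ e := by ring
  refine ⟨max 1 (C / c), fun M hM => ?_⟩
  have hM' : ∀ x, G (M⁻¹.1 x) = G x := fun x => by
    rw [← hM, ← mul_apply_eq_comp, Units.mul_inv, one_apply_eq_self]
  refine le_max_one_of_pow_le_mul he (by positivity) (hinv M hM) ?_
  simpa using hinv M⁻¹ hM'

end Stabilizer

open NormedSpace in
lemma eq_zero_of_forall_norm_exp_smul_le {𝔸 : Type*} [NormedRing 𝔸] [NormedAlgebra ℂ 𝔸]
    [CompleteSpace 𝔸] {a : 𝔸} {K : ℝ} (hK : ∀ t : ℂ, ‖exp (t • a)‖ ≤ K) : a = 0 := by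
  have hderiv := fun t : ℂ => hasDerivAt_exp_smul_const a t
  have hconst : ∀ t : ℂ, exp (t • a) = exp ((0 : ℂ) • a) := fun t =>
    Differentiable.apply_eq_apply_of_bounded (fun s => (hderiv s).differentiableAt)
      (isBounded_iff_forall_norm_le.mpr ⟨K, Set.forall_mem_range.mpr hK⟩) t 0
  simpa using (hderiv 0).unique ((hasDerivAt_const 0 _).congr_of_eventuallyEq (.of_forall hconst))

open NormedSpace in
lemma apply_exp_smul_eq_of_fderiv_apply_eq_zero {𝕜 E F : Type*} [RCLike 𝕜]
    [NormedAddCommGroup E] [NormedSpace 𝕜 E] [CompleteSpace E]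
    [NormedAddCommGroup F] [NormedSpace 𝕜 F] {G : E → F}
    (hG : Differentiable 𝕜 G) {A : E →L[𝕜] E} (hA : ∀ x, fderiv 𝕜 G x (A x) = 0)
    (t : 𝕜) (x : E) : G (exp (t • A) x) = G x := by
  have hderiv : ∀ s : 𝕜, HasDerivAt (fun s => G (exp (s • A) x)) 0 s := fun s => by
    have hflow : HasDerivAt (fun s : 𝕜 => exp (s • A) x) (A (exp (s • A) x)) s :=
      (hasDerivAt_exp_smul_const' A s).clm_apply (hasDerivAt_const s x) |>.congr_deriv (by simp)
    exact ((hG _).hasFDerivAt.comp_hasDerivAt s hflow).congr_deriv (hA _)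
  simpa using is_const_of_deriv_eq_zero (fun s => (hderiv s).differentiableAt)
    (fun s => (hderiv s).deriv) t 0

theorem eq_zero_of_forall_fderiv_apply_eq_zero {E F : Type*} [NormedAddCommGroup E]
    [NormedSpace ℂ E] [FiniteDimensional ℂ E] [NormedAddCommGroup F] [NormedSpace ℂ F]
    {G : E → F} {e : ℕ} (he : 2 ≤ e) (hG : ContDiff ℂ 1 G)
    (hhom : ∀ (c : ℂ) x, fderiv ℂ G (c • x) = c ^ e • fderiv ℂ G x)
    (hcrit : ∀ x, fderiv ℂ G x = 0 → x = 0)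
    {A : E →L[ℂ] E} (hA : ∀ x, fderiv ℂ G x (A x) = 0) : A = 0 := by
  have := FiniteDimensional.proper ℂ E
  obtain ⟨K, hK⟩ := exists_norm_le_of_forall_apply_eq he hG hhom hcrit
  refine eq_zero_of_forall_norm_exp_smul_le (K := K) fun t => ?_
  let _ : NormedAlgebra ℚ (E →L[ℂ] E) := .restrictScalars ℚ ℂ _
  obtain ⟨M, hM⟩ := NormedSpace.isUnit_exp (t • A)
  rw [← hM]
  refine hK M fun x => ?_
  rw [hM, apply_exp_smul_eq_of_fderiv_apply_eq_zero (hG.differentiable one_ne_zero) hA]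

lemma eval_smul_of_isHomogeneous {σ R : Type*} [CommSemiring R] {p : MvPolynomial σ R} {e : ℕ}
    (hp : p.IsHomogeneous e) (c : R) (x : σ → R) : eval (c • x) p = c ^ e * eval x p := by
  rw [eval_eq, eval_eq, Finset.mul_sum]
  refine Finset.sum_congr rfl fun m hm => ?_
  have hdeg : ∑ i ∈ m.support, m i = e :=
    not_not.mp fun hne => mem_support_iff.mp hm (hp.coeff_eq_zero hne)
  simp only [Pi.smul_apply, smul_eq_mul, mul_pow, Finset.prod_mul_distrib,
    Finset.prod_pow_eq_pow_sum, hdeg]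
  ring

section PolynomialFunctions

variable {σ 𝕜 : Type*} [NontriviallyNormedField 𝕜]

section Fintype

variable [Fintype σ]

lemma hasFDerivAt_eval (p : MvPolynomial σ 𝕜) (x : σ → 𝕜) :
    HasFDerivAt (fun y => eval y p)
      (∑ i, eval x (pderiv i p) • ContinuousLinearMap.proj (R := 𝕜) (φ := fun _ : σ => 𝕜) i) x := by
  classical
  induction p using MvPolynomial.induction_on with
  | C a =>
    simp only [eval_C]
    exact (hasFDerivAt_const a x).congr_fderiv (by ext1; simp)
  | add p q hp hq =>
    simp only [map_add]
    exact (hp.fun_add hq).congr_fderiv (by ext1; simp [add_mul, Finset.sum_add_distrib])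
  | mul_X p j hp =>
    have hX := (ContinuousLinearMap.proj (R := 𝕜) (φ := fun _ : σ => 𝕜) j).hasFDerivAt (x := x)
    simp only [map_mul, eval_X]
    refine (hp.mul hX).congr_fderiv ?_
    ext1
    simp [pderiv_X, Pi.single_apply, add_mul, Finset.sum_add_distrib, Finset.mul_sum, mul_assoc,
      apply_ite]

lemma fderiv_eval_apply (p : MvPolynomial σ 𝕜) (x v : σ → 𝕜) :
    fderiv 𝕜 (fun y => eval y p) x v = ∑ i, eval x (pderiv i p) * v i := by
  simp [(hasFDerivAt_eval p x).fderiv]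

end Fintype

variable [Finite σ]

lemma fderiv_eval_smul {g : MvPolynomial σ 𝕜} {d : ℕ} (hg : g.IsHomogeneous d) (c : 𝕜)
    (x : σ → 𝕜) :
    fderiv 𝕜 (fun y => eval y g) (c • x) = c ^ (d - 1) • fderiv 𝕜 (fun y => eval y g) x := by
  have := Fintype.ofFinite σ
  ext1 v
  simp only [smul_apply, fderiv_eval_apply, eval_smul_of_isHomogeneous hg.pderiv,
    smul_eq_mul, Finset.mul_sum, mul_assoc]

lemma fderiv_eval_eq_zero_iff {p : MvPolynomial σ 𝕜} {x : σ → 𝕜} :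
    fderiv 𝕜 (fun y => eval y p) x = 0 ↔ ∀ i, eval x (pderiv i p) = 0 := by
  classical
  have := Fintype.ofFinite σ
  refine ⟨fun h i => ?_, fun h => ?_⟩
  · simpa [fderiv_eval_apply, Pi.single_apply] using DFunLike.congr_fun h (Pi.single i 1)
  · ext1 v
    simp [fderiv_eval_apply, h]

lemma exists_continuousLinearMap_eval_eq {p : MvPolynomial σ 𝕜} (hp : p.IsHomogeneous 1) :
    ∃ l : (σ → 𝕜) →L[𝕜] 𝕜, ∀ x, l x = eval x p := by
  have := Fintype.ofFinite σ
  rw [← mem_homogeneousSubmodule, homogeneousSubmodule_one_eq_span_X,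
    Submodule.mem_span_range_iff_exists_fun] at hp
  obtain ⟨c, rfl⟩ := hp
  exact ⟨∑ i, c i • ContinuousLinearMap.proj i, fun x => by simp [smul_eval]⟩

end PolynomialFunctions

section HomogeneousPart

variable {σ R : Type*} [Finite σ] [CommSemiring R]

/-- The degree `k` part of a power series in finitely many variables, as a polynomial
(`MvPowerSeries.homogeneousComponent` keeps it a power series). -/
noncomputable def homogeneousPart (k : ℕ) : MvPowerSeries σ R →ₗ[R] MvPolynomial σ R :=
  homogeneousComponent k ∘ₗ MvPowerSeries.truncTotal (k + 1)

lemma coeff_homogeneousPart (k : ℕ) (a : MvPowerSeries σ R) (m : σ →₀ ℕ) :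
    coeff m (homogeneousPart k a) = if m.degree = k then MvPowerSeries.coeff m a else 0 := by
  rw [homogeneousPart, LinearMap.comp_apply, coeff_homogeneousComponent]
  refine if_ctx_congr Iff.rfl (fun hm => ?_) fun _ => rfl
  exact MvPowerSeries.coeff_truncTotal _ (by omega)

lemma isHomogeneous_homogeneousPart (k : ℕ) (a : MvPowerSeries σ R) :
    (homogeneousPart k a).IsHomogeneous k :=
  homogeneousComponent_isHomogeneous _ _

lemma homogeneousPart_coe (k : ℕ) (p : MvPolynomial σ R) :
    homogeneousPart k (p : MvPowerSeries σ R) = homogeneousComponent k p := by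
  ext m
  rw [coeff_homogeneousPart, coeff_homogeneousComponent, coeff_coe]

lemma homogeneousPart_mul_coe {p : MvPolynomial σ R} {e : ℕ} (hp : p.IsHomogeneous e) (k : ℕ)
    (a : MvPowerSeries σ R) :
    homogeneousPart (k + e) (a * (p : MvPowerSeries σ R)) = homogeneousPart k a * p := by
  classical
  ext m
  rw [coeff_homogeneousPart]
  split_ifs with hm
  · rw [MvPowerSeries.coeff_mul, MvPolynomial.coeff_mul]
    refine Finset.sum_congr rfl fun x hx => ?_
    rw [coeff_coe, coeff_homogeneousPart]
    rw [← Finset.HasAntidiagonal.mem_antidiagonal.mp hx, map_add] at hm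
    rcases eq_or_ne x.2.degree e with he | he
    · rw [if_pos (by omega)]
    · rw [hp.coeff_eq_zero he, mul_zero, mul_zero]
  · exact (((isHomogeneous_homogeneousPart k a).mul hp).coeff_eq_zero hm).symm

lemma homogeneousPart_mul_coe_of_lt {p : MvPolynomial σ R} {e k : ℕ} (hp : p.IsHomogeneous e)
    (hk : k < e) (a : MvPowerSeries σ R) :
    homogeneousPart k (a * (p : MvPowerSeries σ R)) = 0 := by
  classical
  ext m
  rw [coeff_homogeneousPart, coeff_zero, ite_eq_right_iff]
  intro hm
  rw [MvPowerSeries.coeff_mul]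
  refine Finset.sum_eq_zero fun x hx => ?_
  rw [← Finset.HasAntidiagonal.mem_antidiagonal.mp hx, map_add] at hm
  rw [coeff_coe, hp.coeff_eq_zero (by omega), mul_zero]

end HomogeneousPart

/-- The only relation `∑ i, L i * p i = 0` in which all `L i` are linear forms is the trivial one.
For the partial derivatives of a homogeneous polynomial `g`, this says that no nonzero linear vector
field annihilates `g`. -/
def HasNoLinearSyzygy {ι σ R : Type*} [Fintype ι] [CommSemiring R] (p : ι → MvPolynomial σ R) :
    Prop :=
  ∀ L : ι → MvPolynomial σ R, (∀ i, (L i).IsHomogeneous 1) → ∑ i, L i * p i = 0 → L = 0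

lemma HasNoLinearSyzygy.eq_zero_of_isHomogeneous_zero {σ R : Type*} [Fintype σ] [CommSemiring R]
    {p : σ → MvPolynomial σ R} (hp : HasNoLinearSyzygy p) {c : σ → MvPolynomial σ R}
    (hc : ∀ i, (c i).IsHomogeneous 0) (hsum : ∑ i, c i * p i = 0) : c = 0 := by
  -- Multiplying a constant syzygy by the variable `X i` makes it linear.
  funext i
  have hlin := hp (fun k => X i * c k) (fun k => by simpa using (isHomogeneous_X R i).mul (hc k))
    (by simp only [mul_assoc, ← Finset.mul_sum, hsum, mul_zero])
  exact (isRegular_X (n := i)).left (by simpa using congrFun hlin i)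

lemma HasNoLinearSyzygy.smul_eq_X {σ R : Type*} [Fintype σ] [CommRing R]
    {g : MvPolynomial σ R} {d : ℕ} (hg : g.IsHomogeneous d)
    (hsyz : HasNoLinearSyzygy fun i => pderiv i g) {l : σ → MvPolynomial σ R}
    (hl : ∀ i, (l i).IsHomogeneous 1) (hsum : ∑ i, l i * pderiv i g = g) (i : σ) :
    d • l i = X i := by
  have hzero := hsyz (fun i => d • l i - X i)
    (fun i => (nsmul_mem (hl i) d : d • l i ∈ homogeneousSubmodule σ R 1).sub (isHomogeneous_X R i))
    (by simp only [sub_mul, smul_mul_assoc, Finset.sum_sub_distrib, ← Finset.smul_sum, hsum,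
      hg.sum_X_mul_pderiv, sub_self])
  exact sub_eq_zero.mp (congrFun hzero i)

lemma sum_homogeneousPart_mul_eq_of_sum_mul_add_eq {ι σ R : Type*} [Fintype ι] [Finite σ]
    [CommSemiring R] {p q : ι → MvPolynomial σ R} {g h : MvPolynomial σ R} {e : ℕ}
    (hp : ∀ i, (p i).IsHomogeneous e) (hq : ∀ i, (q i).IsHomogeneous (e + 1))
    (hg : g.IsHomogeneous (e + 1)) (hh : h.IsHomogeneous (e + 2)) {a : ι → MvPowerSeries σ R}
    (ha : ∑ i, a i * ((p i : MvPowerSeries σ R) + (q i : MvPowerSeries σ R)) =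
      (g : MvPowerSeries σ R) + (h : MvPowerSeries σ R)) :
    ∑ i, homogeneousPart 0 (a i) * p i = 0 ∧
    ∑ i, homogeneousPart 1 (a i) * p i + ∑ i, homogeneousPart 0 (a i) * q i = g ∧
    ∑ i, homogeneousPart 2 (a i) * p i + ∑ i, homogeneousPart 1 (a i) * q i = h := by
  have hparts : ∀ k, ∑ i, homogeneousPart k (a i * (p i : MvPowerSeries σ R)) +
      ∑ i, homogeneousPart k (a i * (q i : MvPowerSeries σ R)) =
      (if e + 1 = k then g else 0) + if e + 2 = k then h else 0 := fun k => by
    simpa [mul_add, Finset.sum_add_distrib, homogeneousPart_coe,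
      homogeneousComponent_of_mem hg, homogeneousComponent_of_mem hh, eq_comm (a := k)]
      using congrArg (homogeneousPart k) ha
  refine ⟨?_, ?_, ?_⟩
  · simpa [← homogeneousPart_mul_coe (hp _), homogeneousPart_mul_coe_of_lt (hq _)] using hparts e
  · have hq' := fun i => homogeneousPart_mul_coe (hq i) 0 (a i)
    simpa [← homogeneousPart_mul_coe (hp _), ← hq', add_comm 1 e] using hparts (e + 1)
  · have hq' := fun i => homogeneousPart_mul_coe (hq i) 1 (a i)
    simpa [← homogeneousPart_mul_coe (hp _), ← hq', add_comm 2 e, add_comm 1 (e + 1)]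
      using hparts (e + 2)

theorem mem_span_pderiv_of_coe_add_mem {σ R : Type*} [Fintype σ] [CommRing R] {d : ℕ} (hd : d ≠ 0)
    {g h : MvPolynomial σ R} (hg : g.IsHomogeneous d) (hh : h.IsHomogeneous (d + 1))
    (hsyz : HasNoLinearSyzygy fun i => pderiv i g)
    (hmem : coeToMvPowerSeries.ringHom (g + h) ∈
      Ideal.span (Set.range fun i => coeToMvPowerSeries.ringHom (pderiv i (g + h)))) :
    h ∈ Ideal.span (Set.range fun i => pderiv i g) := by
  obtain ⟨e, rfl⟩ := Nat.exists_eq_add_one_of_ne_zero hd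
  obtain ⟨a, ha⟩ := Ideal.mem_span_range_iff_exists_fun.mp hmem
  have hpg : ∀ i, (pderiv i g).IsHomogeneous e := fun i => hg.pderiv
  have hph : ∀ i, (pderiv i h).IsHomogeneous (e + 1) := fun i => hh.pderiv
  have hf : ∑ i, a i * ((pderiv i g : MvPowerSeries σ R) + (pderiv i h : MvPowerSeries σ R)) =
      (g : MvPowerSeries σ R) + (h : MvPowerSeries σ R) := by simpa using ha
  obtain ⟨hlow, hmid, hhigh⟩ := sum_homogeneousPart_mul_eq_of_sum_mul_add_eq hpg hph hg hh hf
  have hconst : (fun i => homogeneousPart 0 (a i)) = 0 :=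
    hsyz.eq_zero_of_isHomogeneous_zero (fun i => isHomogeneous_homogeneousPart 0 (a i)) hlow
  have hlin : ∀ i, (e + 1) • homogeneousPart 1 (a i) = X i := by
    refine hsyz.smul_eq_X hg (fun i => isHomogeneous_homogeneousPart 1 (a i)) ?_
    simpa [congrFun hconst _] using hmid
  have heuler : (e + 1) • ∑ i, homogeneousPart 1 (a i) * pderiv i h = (e + 2) • h := by
    rw [Finset.smul_sum, ← hh.sum_X_mul_pderiv]
    exact Finset.sum_congr rfl fun i _ => by rw [← smul_mul_assoc, hlin]
  have hsum : h = ∑ i, (-((e + 1) • homogeneousPart 2 (a i))) * pderiv i g := by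
    have hscaled := congrArg ((e + 1) • ·) hhigh
    simp only [smul_add, heuler] at hscaled
    simp only [neg_mul, smul_mul_assoc, Finset.sum_neg_distrib, ← Finset.smul_sum]
    rw [show e + 2 = e + 1 + 1 from rfl, succ_nsmul] at hscaled
    linear_combination hscaled
  exact Ideal.mem_span_range_iff_exists_fun.mpr ⟨_, hsum.symm⟩

theorem hasNoLinearSyzygy_pderiv {σ : Type*} [Fintype σ] {d : ℕ} (hd : 3 ≤ d)
    {g : MvPolynomial σ ℂ} (hg : g.IsHomogeneous d)
    (hsing : ∀ a : σ → ℂ, (∀ i, eval a (pderiv i g) = 0) → a = 0) :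
    HasNoLinearSyzygy fun i => pderiv i g := by
  intro L hL hsum
  choose l hl using fun i => exists_continuousLinearMap_eval_eq (hL i)
  have hfield : ContinuousLinearMap.pi l = 0 := by
    refine eq_zero_of_forall_fderiv_apply_eq_zero (G := fun y => eval y g) (e := d - 1)
      (by omega) (AnalyticOnNhd.eval_mvPolynomial g).contDiff (fderiv_eval_smul hg)
      (fun x hx => hsing x (fderiv_eval_eq_zero_iff.mp hx)) fun x => ?_
    simpa [fderiv_eval_apply, hl, mul_comm] using congrArg (eval x) hsum
  funext i
  refine MvPolynomial.funext fun x => ?_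
  rw [← hl, Pi.zero_apply, map_zero]
  exact congrFun (DFunLike.congr_fun hfield x) i

theorem stmt_0_general {σ : Type*} [Finite σ] {d : ℕ} (hd : 3 ≤ d) {g h : MvPolynomial σ ℂ}
    (hg : g.IsHomogeneous d)
    (hgsing : ∀ a : σ → ℂ, (∀ i, eval a (pderiv i g) = 0) → a = 0)
    (hh : h.IsHomogeneous (d + 1)) (hhJ : h ∉ Ideal.span (Set.range fun i => pderiv i g)) :
    coeToMvPowerSeries.ringHom (g + h) ∉
      Ideal.span (Set.range fun i => coeToMvPowerSeries.ringHom (pderiv i (g + h))) := by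
  have := Fintype.ofFinite σ
  exact fun hmem => hhJ <| mem_span_pderiv_of_coe_add_mem (by omega) hg hh
    (hasNoLinearSyzygy_pderiv hd hg hgsing) hmem

theorem stmt_0 (n : ℕ) (hn : 1 ≤ n) (d : ℕ) (hd : 3 ≤ d)
    (g h : MvPolynomial (Fin n) ℂ)
    (hg : g.IsHomogeneous d)
    (hgsing : ∀ a : Fin n → ℂ, (∀ i : Fin n, eval a (pderiv i g) = 0) → a = 0)
    (hh : h.IsHomogeneous (d + 1))
    (hhJ : h ∉ Ideal.span (Set.range fun i : Fin n => pderiv i g)) :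
    MvPolynomial.coeToMvPowerSeries.ringHom (g + h) ∉
      Ideal.span (Set.range fun i : Fin n =>
        MvPolynomial.coeToMvPowerSeries.ringHom (pderiv i (g + h))) := by
  exact stmt_0_general hd hg hgsing hh hhJ
end

section
/- Let n ≥ 2 and let f = g + h in ℂ[x₁,…,xₙ], where g is homogeneous of degree n+1, the only common zero in ℂⁿ of ∂g/∂x₁, …, ∂g/∂xₙ is the origin, and h lies in the (n+2)-nd power of the ideal (x₁,…,xₙ) (i.e., every monomial appearing in h has total degree at least n+2). Assume that the image of f in ℂ[[x₁,…,xₙ]] does not belong to the ideal of ℂ[[x₁,…,xₙ]] generated by the images of ∂f/∂x₁, …, ∂f/∂xₙ. Then the image of f in ℂ[[x₁,…,xₙ]] does not belong to the ideal J₁(f) of ℂ[[x₁,…,xₙ]] generated by the elements xᵢ·f for 1 ≤ i ≤ n together with the elements δ_{ij}·f − xᵢ·(∂f/∂xⱼ) for 1 ≤ i, j ≤ n, where δ_{ij} is the Kronecker delta. -/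
/-!
Membership `f ∈ J₁(f)` is a relation `u f = ∑ Aᵢⱼ xᵢ ∂ⱼ f` with `u(0) = tr A(0) - 1`. If
`u(0) ≠ 0`, then `f` lies in its Jacobian ideal; so `u(0) = 0` and `M = A(0)` has trace `1`.
Comparing the parts of lowest degree, the linear vector field `∑ Mᵢⱼ xᵢ ∂ⱼ` kills the leading
form `g`.

This forces `tr M = 0`. Differentiating `∑ Mᵢⱼ xᵢ ∂ⱼ g = 0` and evaluating at a left eigenvector
`v` of `M` with eigenvalue `t`, Euler's identity shows that `∇g(v)`, which is nonzero because `g`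
has an isolated singularity, is a right eigenvector with eigenvalue `-d t`, where `d = deg g - 1`.
The spectrum of `M` is thus a finite set stable under multiplication by `-d`; as `d ≥ 2`, it is
contained in `{0}`.
-/

open MvPolynomial
open scoped Matrix

section FiniteSpectrum

theorem eq_zero_of_mem_of_finite_of_forall_mul_mem {R : Type*} [MonoidWithZero R]
    [IsRightCancelMulZero R] {s : Set R} (hs : s.Finite) {c : R}
    (hc : Function.Injective fun k : ℕ => c ^ k) (hcs : ∀ x ∈ s, c * x ∈ s) {x : R} (hx : x ∈ s) :
    x = 0 := by
  by_contra hx0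
  have hmem (k : ℕ) : c ^ k * x ∈ s := by
    induction k with
    | zero => simpa using hx
    | succ k ih => simpa only [pow_succ', mul_assoc] using hcs _ ih
  exact Set.infinite_of_injective_forall_mem ((mul_left_injective₀ hx0).comp hc) hmem hs

theorem neg_natCast_pow_right_injective {R : Type*} [Ring R] [CharZero R] {d : ℕ} (hd : 2 ≤ d) :
    Function.Injective fun k : ℕ => (-(d : R)) ^ k := by
  have hint : Function.Injective fun k : ℕ => (-(d : ℤ)) ^ k :=
    Int.pow_right_injective (by rwa [Int.natAbs_neg, Int.natAbs_natCast])
  intro k l hkl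
  refine hint (Int.cast_injective (α := R) ?_)
  simpa using hkl

variable {σ K : Type*} [Fintype σ] [DecidableEq σ] [Field K] {M : Matrix σ σ K} {t : K}

theorem mem_spectrum_iff_exists_mulVec_eq_smul :
    t ∈ spectrum K M ↔ ∃ v ≠ 0, M *ᵥ v = t • v := by
  rw [Matrix.mem_spectrum_iff_isRoot_charpoly, Polynomial.IsRoot, Matrix.eval_charpoly,
    ← Matrix.exists_mulVec_eq_zero_iff]
  simp [Matrix.sub_mulVec, sub_eq_zero, eq_comm]

theorem mem_spectrum_iff_exists_vecMul_eq_smul :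
    t ∈ spectrum K M ↔ ∃ v ≠ 0, v ᵥ* M = t • v := by
  rw [Matrix.mem_spectrum_iff_isRoot_charpoly, Polynomial.IsRoot, Matrix.eval_charpoly,
    ← Matrix.exists_vecMul_eq_zero_iff]
  simp [Matrix.vecMul_sub, sub_eq_zero, eq_comm]

theorem trace_eq_zero_of_forall_mem_spectrum [IsAlgClosed K]
    (h : ∀ t ∈ spectrum K M, t = 0) : M.trace = 0 := by
  rw [Matrix.trace_eq_sum_roots_charpoly]
  refine Multiset.sum_eq_zero fun t ht => h t ?_
  exact Matrix.mem_spectrum_iff_isRoot_charpoly.mpr (Polynomial.isRoot_of_mem_roots ht)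

end FiniteSpectrum

section LinearVectorField

/-- The linear vector field `∑ Mᵢⱼ xᵢ ∂ⱼ`, as a derivation of the polynomial ring. It preserves
degree, so relations between a power series and its `xᵢ ∂ⱼ`-derivatives pass to leading forms. -/
noncomputable def linearVectorField {σ R : Type*} [Fintype σ] [CommSemiring R]
    (M : Matrix σ σ R) : Derivation R (MvPolynomial σ R) (MvPolynomial σ R) :=
  ∑ i, ∑ j, (C (M i j) * X i) • pderiv j

theorem derivation_sum_apply {ι R A N : Type*} [CommSemiring R] [CommSemiring A] [Algebra R A]
    [AddCommMonoid N] [Module R N] [Module A N] (s : Finset ι) (D : ι → Derivation R A N) (a : A) :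
    (∑ i ∈ s, D i) a = ∑ i ∈ s, D i a :=
  (congrFun (map_sum Derivation.coeFnAddMonoidHom D s) a).trans (Finset.sum_apply ..)

namespace linearVectorField

section CommSemiring

variable {σ R : Type*} [Fintype σ] [CommSemiring R] {M : Matrix σ σ R}

theorem apply_eq_sum (M : Matrix σ σ R) (p : MvPolynomial σ R) :
    linearVectorField M p = ∑ i, ∑ j, C (M i j) * (X i * pderiv j p) := by
  simp [linearVectorField, derivation_sum_apply, mul_assoc]

theorem apply_X (M : Matrix σ σ R) (j : σ) :
    linearVectorField M (X j) = ∑ i, C (M i j) * X i := by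
  classical
  simp [apply_eq_sum, pderiv_X, Pi.single_apply]

theorem eval_apply {v : σ → R} {t : R} (hv : v ᵥ* M = t • v) (p : MvPolynomial σ R) :
    eval v (linearVectorField M p) = t * ∑ j, v j * eval v (pderiv j p) := by
  have hcolumn (j : σ) : ∑ i, M i j * v i = t * v j := by
    simpa [Matrix.vecMul, dotProduct, mul_comm] using congrFun hv j
  simp only [apply_eq_sum, map_sum, map_mul, eval_C, eval_X]
  rw [Finset.sum_comm]
  simp only [Finset.mul_sum, ← mul_assoc, ← Finset.sum_mul, hcolumn]

theorem eval_apply_of_isHomogeneous {v : σ → R} {t : R} (hv : v ᵥ* M = t • v)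
    {p : MvPolynomial σ R} {k : ℕ} (hp : p.IsHomogeneous k) :
    eval v (linearVectorField M p) = t * (k * eval v p) := by
  have heuler : ∑ j, v j * eval v (pderiv j p) = k * eval v p := by
    simpa using congrArg (eval v) hp.sum_X_mul_pderiv
  rw [eval_apply hv, heuler]

end CommSemiring

section CommRing

variable {σ R : Type*} [Fintype σ] [CommRing R] {M : Matrix σ σ R}

theorem lie_pderiv (M : Matrix σ σ R) (k : σ) :
    ⁅(pderiv k : Derivation R (MvPolynomial σ R) (MvPolynomial σ R)), linearVectorField M⁆ =
      ∑ j, M k j • pderiv j := by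
  classical
  ext1 i
  simp [Derivation.commutator_apply, apply_X, pderiv_X, Pi.single_apply, derivation_sum_apply,
    apply_ite, smul_eq_C_mul]

theorem mulVec_gradient {v : σ → R} {t : R} (hv : v ᵥ* M = t • v) {g : MvPolynomial σ R} {d : ℕ}
    (hg : g.IsHomogeneous (d + 1)) (hMg : linearVectorField M g = 0) :
    M *ᵥ (fun j => eval v (pderiv j g)) = (-(d : R) * t) • fun j => eval v (pderiv j g) := by
  ext k
  have hbracket := congrArg (eval v) (DFunLike.congr_fun (lie_pderiv M k) g)
  rw [Derivation.commutator_apply, hMg, map_zero, zero_sub, map_neg,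
    eval_apply_of_isHomogeneous hv hg.pderiv] at hbracket
  simp only [derivation_sum_apply, map_sum, Derivation.smul_apply, smul_eval,
    Nat.add_sub_cancel] at hbracket
  simp only [Matrix.mulVec, dotProduct, ← hbracket, Pi.smul_apply, smul_eq_mul]
  ring

end CommRing

theorem trace_eq_zero_of_apply_eq_zero {σ K : Type*} [Fintype σ] [Field K] [IsAlgClosed K]
    [CharZero K] {M : Matrix σ σ K} {d : ℕ} (hd : 2 ≤ d) {g : MvPolynomial σ K}
    (hg : g.IsHomogeneous (d + 1))
    (hgsing : ∀ a : σ → K, (∀ i, eval a (pderiv i g) = 0) → a = 0)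
    (hMg : linearVectorField M g = 0) : M.trace = 0 := by
  classical
  have hstable (t : K) (ht : t ∈ spectrum K M) : -(d : K) * t ∈ spectrum K M := by
    obtain ⟨v, hv0, hv⟩ := mem_spectrum_iff_exists_vecMul_eq_smul.mp ht
    refine mem_spectrum_iff_exists_mulVec_eq_smul.mpr ⟨_, ?_, mulVec_gradient hv hg hMg⟩
    exact fun hgrad => hv0 (hgsing v (congrFun hgrad))
  exact trace_eq_zero_of_forall_mem_spectrum fun t ht =>
    eq_zero_of_mem_of_finite_of_forall_mul_mem M.finite_spectrum
      (neg_natCast_pow_right_injective hd) hstable ht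

end linearVectorField

end LinearVectorField

section LeadingForm

variable {σ R : Type*} [CommSemiring R]

theorem homogeneousComponent_zero_eq_C_constantCoeff (f : MvPowerSeries σ R) :
    f.homogeneousComponent 0 = MvPowerSeries.C f.constantCoeff := by
  classical
  ext m
  rw [MvPowerSeries.coeff_homogeneousComponent, MvPowerSeries.coeff_C]
  simp only [Finsupp.degree_eq_zero_iff]
  split_ifs with hm <;> simp [hm]

theorem homogeneousComponent_mul_eq_C_constantCoeff_mul (u : MvPowerSeries σ R)
    {f : MvPowerSeries σ R} {k : ℕ} (hf : k ≤ f.order) :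
    (u * f).homogeneousComponent k =
      MvPowerSeries.C u.constantCoeff * f.homogeneousComponent k := by
  have hmul := MvPowerSeries.homogeneousComponent_mul_of_le_order (f := u) (p := 0) (by simp) hf
  rwa [zero_add, homogeneousComponent_zero_eq_C_constantCoeff] at hmul

theorem homogeneousComponent_coe_of_isHomogeneous {p : MvPolynomial σ R} {k : ℕ}
    (hp : p.IsHomogeneous k) : (p : MvPowerSeries σ R).homogeneousComponent k = p := by
  ext m
  rw [MvPowerSeries.coeff_homogeneousComponent, ite_eq_left_iff, coeff_coe]
  exact fun hm => (hp.coeff_eq_zero hm).symm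

theorem le_order_coe_iff_mem_pow_idealOfVars {p : MvPolynomial σ R} {k : ℕ} :
    k ≤ (p : MvPowerSeries σ R).order ↔ p ∈ idealOfVars σ R ^ k := by
  rw [mem_pow_idealOfVars_iff']
  constructor
  · intro hk m hm
    have := MvPowerSeries.coeff_of_lt_order (f := (p : MvPowerSeries σ R)) (d := m)
      (lt_of_lt_of_le (by exact_mod_cast hm) hk)
    simpa using this
  · exact fun hk => MvPowerSeries.nat_le_order fun m hm => by simpa using hk m hm

theorem le_order_coe_of_isHomogeneous {p : MvPolynomial σ R} {k : ℕ} (hp : p.IsHomogeneous k) :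
    k ≤ (p : MvPowerSeries σ R).order :=
  MvPowerSeries.nat_le_order fun m hm => hp.coeff_eq_zero (d := m) hm.ne

theorem coeff_X_mul_pderiv (f : MvPowerSeries σ R) (i j : σ) (m : σ →₀ ℕ) :
    MvPowerSeries.coeff m (MvPowerSeries.X i * MvPowerSeries.pderiv R j f) =
      if Finsupp.single i 1 ≤ m then
        MvPowerSeries.coeff (m - Finsupp.single i 1 + Finsupp.single j 1) f *
          (((m - Finsupp.single i 1 : σ →₀ ℕ) j : R) + 1)
      else 0 := by
  rw [MvPowerSeries.X, MvPowerSeries.coeff_monomial_mul, one_mul, MvPowerSeries.coeff_pderiv]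

theorem degree_tsub_single_add_single {m : σ →₀ ℕ} {i : σ} (hm : Finsupp.single i 1 ≤ m) (j : σ) :
    (m - Finsupp.single i 1 + Finsupp.single j 1).degree = m.degree := by
  conv_rhs => rw [← tsub_add_cancel_of_le hm]
  simp only [map_add, Finsupp.degree_single]

theorem homogeneousComponent_X_mul_pderiv (f : MvPowerSeries σ R) (k : ℕ) (i j : σ) :
    (MvPowerSeries.X i * MvPowerSeries.pderiv R j f).homogeneousComponent k =
      MvPowerSeries.X i * MvPowerSeries.pderiv R j (f.homogeneousComponent k) := by
  ext m
  simp only [MvPowerSeries.coeff_homogeneousComponent, coeff_X_mul_pderiv]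
  split_ifs <;> simp_all [degree_tsub_single_add_single]

theorem order_le_order_X_mul_pderiv (f : MvPowerSeries σ R) (i j : σ) :
    f.order ≤ (MvPowerSeries.X i * MvPowerSeries.pderiv R j f).order := by
  refine MvPowerSeries.le_order fun m hm => ?_
  rw [coeff_X_mul_pderiv]
  split_ifs with hi
  · rw [MvPowerSeries.coeff_of_lt_order (by rwa [degree_tsub_single_add_single hi]), zero_mul]
  · rfl

theorem C_constantCoeff_mul_homogeneousComponent_of_mul_eq_sum [Fintype σ]
    {f u : MvPowerSeries σ R} {A : Matrix σ σ (MvPowerSeries σ R)} {k : ℕ} (hf : k ≤ f.order)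
    (hrel : u * f = ∑ i, ∑ j, A i j * (MvPowerSeries.X i * MvPowerSeries.pderiv R j f)) :
    MvPowerSeries.C u.constantCoeff * f.homogeneousComponent k =
      ∑ i, ∑ j, MvPowerSeries.C (A i j).constantCoeff *
        (MvPowerSeries.X i * MvPowerSeries.pderiv R j (f.homogeneousComponent k)) := by
  rw [← homogeneousComponent_mul_eq_C_constantCoeff_mul u hf, hrel]
  simp only [map_sum]
  refine Finset.sum_congr rfl fun i _ => Finset.sum_congr rfl fun j _ => ?_
  rw [homogeneousComponent_mul_eq_C_constantCoeff_mul _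
    (hf.trans (order_le_order_X_mul_pderiv f i j)), homogeneousComponent_X_mul_pderiv]

theorem linearVectorField_map_constantCoeff_apply [Fintype σ]
    {f u : MvPowerSeries σ R} {A : Matrix σ σ (MvPowerSeries σ R)} {k : ℕ} (hf : k ≤ f.order)
    (hrel : u * f = ∑ i, ∑ j, A i j * (MvPowerSeries.X i * MvPowerSeries.pderiv R j f))
    {g : MvPolynomial σ R} (hg : f.homogeneousComponent k = g) :
    linearVectorField (A.map MvPowerSeries.constantCoeff) g =
      C u.constantCoeff * g := by
  have hlead := C_constantCoeff_mul_homogeneousComponent_of_mul_eq_sum hf hrel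
  simp only [hg, MvPowerSeries.pderiv_coe] at hlead
  refine coe_injective σ R ?_
  simp only [linearVectorField.apply_eq_sum, ← coeToMvPowerSeries.ringHom_apply, map_sum, map_mul]
  simpa only [coeToMvPowerSeries.ringHom_apply, coe_C, coe_X, Matrix.map_apply] using hlead.symm

end LeadingForm

section JacobianIdeal

variable {σ R : Type*} [CommRing R]

/-- The Jacobian ideal `(∂f/∂xᵢ)ᵢ` of a formal power series. -/
noncomputable def jacobianIdeal (f : MvPowerSeries σ R) : Ideal (MvPowerSeries σ R) :=
  Ideal.span (Set.range fun i : σ => MvPowerSeries.pderiv R i f)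

/-- The ideal `J₁(f)` generated by the `xᵢ f` and the `δᵢⱼ f - xᵢ ∂f/∂xⱼ`. With `F` the order
filtration on differential operators, `J₁(f) · f⁻²` is `F₁𝒟` applied to `(x₁, …, xₙ) · f⁻¹`. -/
noncomputable def J₁ [DecidableEq σ] (f : MvPowerSeries σ R) : Ideal (MvPowerSeries σ R) :=
  Ideal.span
    ((Set.range fun i : σ => MvPowerSeries.X i * f) ∪
     (Set.range fun p : σ × σ =>
        (if p.1 = p.2 then f else 0) - MvPowerSeries.X p.1 * MvPowerSeries.pderiv R p.2 f))

theorem jacobianIdeal_coe (f : MvPolynomial σ R) :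
    jacobianIdeal (f : MvPowerSeries σ R) =
      Ideal.span (Set.range fun i : σ => coeToMvPowerSeries.ringHom (pderiv i f)) := by
  simp only [jacobianIdeal, MvPowerSeries.pderiv_coe, coeToMvPowerSeries.ringHom_apply]

theorem J₁_coe [DecidableEq σ] (f : MvPolynomial σ R) :
    J₁ (f : MvPowerSeries σ R) =
      Ideal.span
        ((Set.range fun i : σ => coeToMvPowerSeries.ringHom (X i * f)) ∪
         (Set.range fun p : σ × σ =>
            coeToMvPowerSeries.ringHom
              ((if p.1 = p.2 then f else 0) - X p.1 * pderiv p.2 f))) := by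
  simp only [J₁, map_sub, map_mul, apply_ite, map_zero, coeToMvPowerSeries.ringHom_apply,
    coe_X, MvPowerSeries.pderiv_coe]

variable [Fintype σ]

theorem exists_eq_of_mem_J₁ [DecidableEq σ] {f y : MvPowerSeries σ R} (hy : y ∈ J₁ f) :
    ∃ (b : σ → MvPowerSeries σ R) (A : Matrix σ σ (MvPowerSeries σ R)),
      y = (∑ i, b i * MvPowerSeries.X i + A.trace) * f -
        ∑ i, ∑ j, A i j * (MvPowerSeries.X i * MvPowerSeries.pderiv R j f) := by
  rw [J₁, Ideal.span_union, Submodule.mem_sup] at hy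
  obtain ⟨_, hb, _, hA, rfl⟩ := hy
  obtain ⟨b, rfl⟩ := Ideal.mem_span_range_iff_exists_fun.mp hb
  obtain ⟨A, rfl⟩ := Ideal.mem_span_range_iff_exists_fun.mp hA
  refine ⟨b, Matrix.of fun i j => A (i, j), ?_⟩
  simp [Fintype.sum_prod_type, mul_sub, add_mul, Finset.sum_mul, Matrix.trace, mul_assoc,
    add_sub_assoc]

theorem mem_jacobianIdeal_of_isUnit_of_mul_eq_sum {f u : MvPowerSeries σ R}
    {A : Matrix σ σ (MvPowerSeries σ R)} (hu : IsUnit u)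
    (hrel : u * f = ∑ i, ∑ j, A i j * (MvPowerSeries.X i * MvPowerSeries.pderiv R j f)) :
    f ∈ jacobianIdeal f := by
  rw [← Ideal.unit_mul_mem_iff_mem _ hu, hrel]
  refine Ideal.sum_mem _ fun i _ => Ideal.sum_mem _ fun j _ => ?_
  exact Ideal.mul_mem_left _ _ (Ideal.mul_mem_left _ _ (Ideal.subset_span ⟨j, rfl⟩))

theorem exists_trace_eq_one_of_mem_J₁ {K : Type*} [Field K] [DecidableEq σ]
    {f : MvPowerSeries σ K} (hJ : f ∈ J₁ f) (hJac : f ∉ jacobianIdeal f) :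
    ∃ (u : MvPowerSeries σ K) (A : Matrix σ σ (MvPowerSeries σ K)),
      u.constantCoeff = 0 ∧ (A.map MvPowerSeries.constantCoeff).trace = 1 ∧
        u * f = ∑ i, ∑ j, A i j * (MvPowerSeries.X i * MvPowerSeries.pderiv K j f) := by
  obtain ⟨b, A, hf⟩ := exists_eq_of_mem_J₁ hJ
  set u := ∑ i, b i * MvPowerSeries.X i + A.trace - 1 with hu
  have hrel : u * f = ∑ i, ∑ j, A i j * (MvPowerSeries.X i * MvPowerSeries.pderiv K j f) := by
    linear_combination f * hu - hf
  have hu0 : u.constantCoeff = 0 := by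
    by_contra hne
    refine hJac (mem_jacobianIdeal_of_isUnit_of_mul_eq_sum ?_ hrel)
    exact MvPowerSeries.isUnit_iff_constantCoeff.mpr (isUnit_iff_ne_zero.mpr hne)
  have htrace : u.constantCoeff = (A.map MvPowerSeries.constantCoeff).trace - 1 := by
    simp [hu, Matrix.trace]
  exact ⟨u, A, hu0, sub_eq_zero.mp (htrace.symm.trans hu0), hrel⟩

end JacobianIdeal

theorem stmt_1_general {σ K : Type*} [Finite σ] [DecidableEq σ] [Field K] [IsAlgClosed K]
    [CharZero K] {d : ℕ} (hd : 2 ≤ d) {g : MvPolynomial σ K} {h : MvPowerSeries σ K}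
    (hg : g.IsHomogeneous (d + 1))
    (hgsing : ∀ a : σ → K, (∀ i, eval a (pderiv i g) = 0) → a = 0)
    (hh : (d + 1 : ℕ) < h.order)
    (hJac : (g : MvPowerSeries σ K) + h ∉ jacobianIdeal (g + h : MvPowerSeries σ K)) :
    (g : MvPowerSeries σ K) + h ∉ J₁ (g + h : MvPowerSeries σ K) := by
  cases nonempty_fintype σ
  intro hJ
  obtain ⟨u, A, hu, htrace, hrel⟩ := exists_trace_eq_one_of_mem_J₁ hJ hJac
  have horder : (d + 1 : ℕ) ≤ (g + h : MvPowerSeries σ K).order :=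
    (le_min (le_order_coe_of_isHomogeneous hg) hh.le).trans MvPowerSeries.min_order_le_add
  have hlead : (g + h : MvPowerSeries σ K).homogeneousComponent (d + 1) = g := by
    rw [map_add, homogeneousComponent_coe_of_isHomogeneous hg,
      MvPowerSeries.homogeneousComponent_of_lt_order_eq_zero hh, add_zero]
  have hkill : linearVectorField (A.map MvPowerSeries.constantCoeff) g = 0 := by
    rw [linearVectorField_map_constantCoeff_apply horder hrel hlead, hu, C_0, zero_mul]
  have htrace_zero := linearVectorField.trace_eq_zero_of_apply_eq_zero hd hg hgsing hkill
  exact one_ne_zero (htrace.symm.trans htrace_zero)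

theorem stmt_1 (n : ℕ) (hn : 2 ≤ n)
    (g h : MvPolynomial (Fin n) ℂ)
    (hg : g.IsHomogeneous (n + 1))
    (hgsing : ∀ a : Fin n → ℂ, (∀ i : Fin n, eval a (pderiv i g) = 0) → a = 0)
    (hh : h ∈ (Ideal.span (Set.range (X : Fin n → MvPolynomial (Fin n) ℂ))) ^ (n + 2))
    (hfJac : MvPolynomial.coeToMvPowerSeries.ringHom (g + h) ∉
      Ideal.span (Set.range fun i : Fin n =>
        MvPolynomial.coeToMvPowerSeries.ringHom (pderiv i (g + h)))) :
    MvPolynomial.coeToMvPowerSeries.ringHom (g + h) ∉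
      Ideal.span
        ((Set.range fun i : Fin n =>
            MvPolynomial.coeToMvPowerSeries.ringHom (X i * (g + h))) ∪
         (Set.range fun p : Fin n × Fin n =>
            MvPolynomial.coeToMvPowerSeries.ringHom
              ((if p.1 = p.2 then g + h else 0) - X p.1 * pderiv p.2 (g + h)))) := by
  rw [← J₁_coe, coeToMvPowerSeries.ringHom_apply, coe_add]
  rw [← jacobianIdeal_coe, coeToMvPowerSeries.ringHom_apply, coe_add] at hfJac
  exact stmt_1_general hn hg hgsing
    (lt_of_lt_of_le (by norm_cast; lia) (le_order_coe_iff_mem_pow_idealOfVars.mpr hh)) hfJac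
end

section
/- Let f = x⁴ + y⁴ + z⁴ + x·y²·z² in ℂ[x,y,z]. Then the image of f in the formal power series ring ℂ[[x,y,z]] does not belong to the ideal of ℂ[[x,y,z]] generated by the images of the partial derivatives ∂f/∂x, ∂f/∂y, ∂f/∂z. -/
open MvPolynomial

/-- The canonical ring homomorphism `ℂ[x,y,z] → ℂ[[x,y,z]]`. -/
noncomputable def ι : MvPolynomial (Fin 3) ℂ →+* MvPowerSeries (Fin 3) ℂ :=
  MvPolynomial.coeToMvPowerSeries.ringHom

/-- The polynomial `f = x⁴ + y⁴ + z⁴ + x·y²·z²` in `ℂ[x,y,z]`. -/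
noncomputable def f : MvPolynomial (Fin 3) ℂ :=
  X 0 ^ 4 + X 1 ^ 4 + X 2 ^ 4 + X 0 * X 1 ^ 2 * X 2 ^ 2

/-!
Let `F = ∑ xᵢ^d + c x^e` with `eᵢ ≤ d - 2` for all `i` and `|e| > d`. Among the products of a
monomial with a partial derivative of `F`, only `xᵢ ∂ᵢF = d xᵢ^d + c eᵢ x^e` involve any of the
monomials `x₁^d, …, xₙ^d, x^e`. The functional `p ↦ d p_e - c ∑ eᵢ p_{d εᵢ}` vanishes on these
products, hence on the whole Jacobian ideal, whereas its value at `F` is `c (d - |e|)`.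
For `f` we have `d = 4` and `e = (1, 2, 2)`, and this value is `-1`.
-/

open Finsupp (single)

theorem degree_eq_apply_of_le_single {σ : Type*} {d : ℕ} {a : σ →₀ ℕ} {j : σ}
    (h : a ≤ single j d) : a.degree = a j := by
  have eq_single : a = single j (a j) := by
    ext k
    by_cases hk : j = k
    · simp [hk]
    · simpa [hk] using h k
  rw [eq_single, Finsupp.degree_single, Finsupp.single_eq_same]

theorem not_tsub_single_one_le_single {σ : Type*} {d : ℕ} {e : σ →₀ ℕ}
    (he : ∀ i, e i < d) (hd : d < e.degree) (i j : σ) :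
    ¬ e - single i 1 ≤ single j d := by
  intro hle
  have degree_le : e.degree ≤ (e - single i 1).degree + 1 := by
    simpa only [map_add, Finsupp.degree_single] using
      Finsupp.degree_mono (le_tsub_add : e ≤ e - single i 1 + single i 1)
  have degree_sub_lt : (e - single i 1).degree < d := by
    rw [degree_eq_apply_of_le_single hle]
    exact (Finsupp.le_def.mp tsub_le_self j).trans_lt (he j)
  omega

section FermatPerturbation

variable {σ R : Type*} [Fintype σ] [CommRing R]

theorem pderiv_psum (d : ℕ) (i : σ) :
    pderiv i (psum σ R d) = monomial (single i (d - 1)) (d : R) := by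
  rw [psum, map_sum, Finset.sum_eq_single i]
  · simp [X_pow_eq_monomial, pderiv_monomial]
  · intro j _ hj
    rw [pderiv_pow, pderiv_X_of_ne hj, mul_zero]
  · exact fun hi ↦ absurd (Finset.mem_univ i) hi

theorem coeff_single_psum {d : ℕ} (hd : d ≠ 0) (j : σ) :
    coeff (single j d) (psum σ R d) = 1 := by
  classical
  simp [psum, coeff_sum, coeff_X_pow, Finsupp.single_left_inj hd]

theorem coeff_psum_eq_zero {d : ℕ} {e : σ →₀ ℕ} (he : ∀ i, e i < d) :
    coeff e (psum σ R d) = 0 := by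
  classical
  rw [psum, coeff_sum]
  refine Finset.sum_eq_zero fun i _ ↦ ?_
  rw [coeff_X_pow, if_neg]
  rintro rfl
  simpa using he i

/-- The Fermat polynomial `∑ xᵢ^d` perturbed by the monomial `c x^e`. -/
noncomputable def fermatPerturbation (d : ℕ) (e : σ →₀ ℕ) (c : R) : MvPolynomial σ R :=
  psum σ R d + monomial e c

/-- The functional `p ↦ d p_e - c ∑ eᵢ p_{d εᵢ}` on power series, where `p_m` is the coefficient
of `x^m` in `p`. It separates `fermatPerturbation d e c` from its Jacobian ideal. -/
noncomputable def jacobianFunctional (d : ℕ) (e : σ →₀ ℕ) (c : R) : MvPowerSeries σ R →ₗ[R] R :=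
  (d : R) • MvPowerSeries.coeff e -
    c • ∑ j, (e j : R) • MvPowerSeries.coeff (single j d)

variable {d : ℕ} {e : σ →₀ ℕ}

theorem coe_pderiv_fermatPerturbation (c : R) (i : σ) :
    (pderiv i (fermatPerturbation d e c) : MvPowerSeries σ R) =
      MvPowerSeries.monomial (single i (d - 1)) (d : R) +
        MvPowerSeries.monomial (e - single i 1) (c * e i) := by
  simp [fermatPerturbation, pderiv_psum, pderiv_monomial]

theorem coeff_mul_pderiv_fermatPerturbation (he : ∀ i, e i + 1 < d) (c : R) (i : σ)
    (p : MvPowerSeries σ R) :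
    MvPowerSeries.coeff e (p * (pderiv i (fermatPerturbation d e c) : MvPowerSeries σ R)) =
      MvPowerSeries.coeff (single i 1) p * (c * e i) := by
  classical
  have not_le : ¬ single i (d - 1) ≤ e := by
    have := he i
    rw [Finsupp.single_le_iff]
    omega
  rw [coe_pderiv_fermatPerturbation, mul_add, map_add, MvPowerSeries.coeff_mul_monomial,
    MvPowerSeries.coeff_mul_monomial, if_neg not_le, if_pos tsub_le_self, zero_add]
  rcases Nat.eq_zero_or_pos (e i) with hi | hi
  · simp [hi]
  · rw [tsub_tsub_cancel_of_le (Finsupp.single_le_iff.mpr hi)]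

theorem coeff_single_mul_pderiv_fermatPerturbation [DecidableEq σ] (he : ∀ i, e i + 1 < d)
    (hd : d < e.degree) (c : R) (i j : σ) (p : MvPowerSeries σ R) :
    MvPowerSeries.coeff (single j d)
        (p * (pderiv i (fermatPerturbation d e c) : MvPowerSeries σ R)) =
      if j = i then MvPowerSeries.coeff (single i 1) p * d else 0 := by
  have one_lt : 1 < d := by have := he i; omega
  have not_le : ¬ e - single i 1 ≤ single j d :=
    not_tsub_single_one_le_single (fun k ↦ (Nat.lt_succ_self _).trans (he k)) hd i j
  rw [coe_pderiv_fermatPerturbation, mul_add, map_add, MvPowerSeries.coeff_mul_monomial,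
    MvPowerSeries.coeff_mul_monomial, if_neg not_le, add_zero]
  by_cases hji : j = i
  · subst hji
    rw [if_pos rfl, if_pos (Finsupp.single_mono (Nat.sub_le d 1)), ← Finsupp.single_tsub,
      Nat.sub_sub_self one_lt.le]
  · rw [if_neg hji, if_neg]
    simp only [Finsupp.single_le_iff, Finsupp.single_apply, if_neg hji]
    omega

theorem jacobianFunctional_mul_pderiv (he : ∀ i, e i + 1 < d) (hd : d < e.degree) (c : R) (i : σ)
    (p : MvPowerSeries σ R) :
    jacobianFunctional d e c
      (p * (pderiv i (fermatPerturbation d e c) : MvPowerSeries σ R)) = 0 := by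
  classical
  simp only [jacobianFunctional, LinearMap.sub_apply, LinearMap.smul_apply, LinearMap.sum_apply,
    smul_eq_mul, coeff_mul_pderiv_fermatPerturbation he,
    coeff_single_mul_pderiv_fermatPerturbation he hd, mul_ite, mul_zero, Finset.sum_ite_eq',
    Finset.mem_univ, if_true]
  ring

theorem jacobianFunctional_eq_zero_of_mem_span (he : ∀ i, e i + 1 < d) (hd : d < e.degree) (c : R)
    {p : MvPowerSeries σ R}
    (hp : p ∈ Ideal.span (Set.range fun i ↦
      (pderiv i (fermatPerturbation d e c) : MvPowerSeries σ R))) :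
    jacobianFunctional d e c p = 0 := by
  obtain ⟨q, rfl⟩ := Ideal.mem_span_range_iff_exists_fun.mp hp
  rw [map_sum]
  exact Finset.sum_eq_zero fun i _ ↦ jacobianFunctional_mul_pderiv he hd c i (q i)

theorem jacobianFunctional_fermatPerturbation (he : ∀ i, e i < d) (c : R) :
    jacobianFunctional d e c (fermatPerturbation d e c : MvPowerSeries σ R) =
      c * (d - e.degree) := by
  classical
  have coeff_e : coeff e (fermatPerturbation d e c) = c := by
    simp [fermatPerturbation, coeff_psum_eq_zero he]
  have coeff_single (j : σ) : coeff (single j d) (fermatPerturbation d e c) = 1 := by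
    have ne : e ≠ single j d := by
      rintro rfl
      simpa using he j
    rw [fermatPerturbation, coeff_add, coeff_single_psum (Nat.ne_zero_of_lt (he j)),
      coeff_monomial, if_neg ne, add_zero]
  simp only [jacobianFunctional, LinearMap.sub_apply, LinearMap.smul_apply, LinearMap.sum_apply,
    smul_eq_mul, coeff_coe, coeff_e, coeff_single, mul_one, Finsupp.degree_eq_sum, Nat.cast_sum]
  ring

theorem stmt_3_general (he : ∀ i, e i + 1 < d) (hd : d < e.degree) {c : R}
    (hc : c * (d - e.degree) ≠ 0) :
    (fermatPerturbation d e c : MvPowerSeries σ R) ∉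
      Ideal.span (Set.range fun i ↦
        (pderiv i (fermatPerturbation d e c) : MvPowerSeries σ R)) := by
  intro hmem
  apply hc
  rw [← jacobianFunctional_fermatPerturbation (fun i ↦ (Nat.lt_succ_self _).trans (he i)) c]
  exact jacobianFunctional_eq_zero_of_mem_span he hd c hmem

end FermatPerturbation

theorem f_eq_fermatPerturbation :
    f = fermatPerturbation 4 (Finsupp.equivFunOnFinite.symm ![1, 2, 2]) 1 := by
  simp [f, fermatPerturbation, psum, Fin.sum_univ_three, monomial_eq, Finsupp.prod_fintype,
    Fin.prod_univ_three]

theorem span_pderiv_eq_span_range (p : MvPolynomial (Fin 3) ℂ) :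
    Ideal.span {ι (pderiv 0 p), ι (pderiv 1 p), ι (pderiv 2 p)} =
      Ideal.span (Set.range fun i ↦ (pderiv i p : MvPowerSeries (Fin 3) ℂ)) := by
  congr 1
  ext q
  simp [Fin.exists_fin_succ, eq_comm, ι]

theorem stmt_3 :
    ι f ∉ Ideal.span {ι (pderiv 0 f), ι (pderiv 1 f), ι (pderiv 2 f)} := by
  rw [span_pderiv_eq_span_range, f_eq_fermatPerturbation]
  have degree_eq : (Finsupp.equivFunOnFinite.symm ![1, 2, 2] : Fin 3 →₀ ℕ).degree = 5 := by
    simp [Finsupp.degree_eq_sum, Fin.sum_univ_three]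
  refine stmt_3_general (fun i ↦ ?_) ?_ ?_
  · fin_cases i <;> simp
  · rw [degree_eq]
    norm_num
  · rw [degree_eq]
    norm_num
end

section
/- Let f = x⁴ + y⁴ + z⁴ + x·y²·z² in ℂ[x,y,z]. If (a,b,c) ∈ ℂ³ satisfies f(a,b,c) = 0, ∂f/∂x(a,b,c) = 0, ∂f/∂y(a,b,c) = 0, and ∂f/∂z(a,b,c) = 0, then (a,b,c) = (0,0,0). In other words, the common zero locus in ℂ³ of f, ∂f/∂x, ∂f/∂y, ∂f/∂z is exactly the origin. -/
open MvPolynomial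

/-!
Apart from `x⁴`, every term of `f` is homogeneous of degree `4` in `(y, z)`, so Euler's identity in
these two variables reads `y ∂f/∂y + z ∂f/∂z = 4 (f - x⁴)`. At a common zero of `f`, `∂f/∂y` and
`∂f/∂z` this forces `x = 0`, and on the plane `x = 0` the two derivatives are `4y³` and `4z³`.
-/

open scoped nonZeroDivisors

theorem eq_zero_of_mul_pow_eq_zero {M : Type*} [CommMonoidWithZero M] [IsReduced M]
    {r t : M} {n : ℕ} (hr : r ∈ M⁰) (h : r * t ^ n = 0) : t = 0 :=
  eq_zero_of_pow_eq_zero ((mul_left_mem_nonZeroDivisors_eq_zero_iff hr).mp h)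

section Quartic

variable (R : Type*) [CommRing R]

/-- The polynomial `x⁴ + y⁴ + z⁴ + x·y²·z²` over an arbitrary commutative ring `R`, with the
variables `x, y, z` indexed by `0, 1, 2`; over `ℂ` it is `f`. -/
noncomputable def quartic : MvPolynomial (Fin 3) R :=
  X 0 ^ 4 + X 1 ^ 4 + X 2 ^ 4 + X 0 * X 1 ^ 2 * X 2 ^ 2

theorem pderiv_one_quartic :
    pderiv 1 (quartic R) = 4 * X 1 ^ 3 + 2 * X 0 * X 1 * X 2 ^ 2 := by
  simp only [quartic, map_add, Derivation.leibniz, Derivation.leibniz_pow, pderiv_X,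
    Pi.single_apply, Fin.reduceEq, zero_ne_one, ↓reduceIte, smul_eq_mul, nsmul_eq_mul,
    Nat.cast_ofNat]
  ring

theorem pderiv_two_quartic :
    pderiv 2 (quartic R) = 4 * X 2 ^ 3 + 2 * X 0 * X 1 ^ 2 * X 2 := by
  simp only [quartic, map_add, Derivation.leibniz, Derivation.leibniz_pow, pderiv_X,
    Pi.single_apply, Fin.reduceEq, ↓reduceIte, smul_eq_mul, nsmul_eq_mul,
    Nat.cast_ofNat]
  ring

theorem X_one_mul_pderiv_add_X_two_mul_pderiv_quartic :
    X 1 * pderiv 1 (quartic R) + X 2 * pderiv 2 (quartic R) = 4 * (quartic R - X 0 ^ 4) := by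
  rw [pderiv_one_quartic, pderiv_two_quartic, quartic]
  ring

end Quartic

theorem stmt_4_general {R : Type*} [CommRing R] [IsReduced R] (h_two : (2 : R) ∈ R⁰) (a b c : R)
    (hf : eval ![a, b, c] (quartic R) = 0)
    (hy : eval ![a, b, c] (pderiv 1 (quartic R)) = 0)
    (hz : eval ![a, b, c] (pderiv 2 (quartic R)) = 0) :
    a = 0 ∧ b = 0 ∧ c = 0 := by
  have h_four : (4 : R) ∈ R⁰ := by
    convert mul_mem h_two h_two using 1
    norm_num
  have four_mul_pow : 4 * a ^ 4 = 0 := by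
    simpa [hf, hy, hz] using
      congrArg (eval ![a, b, c]) (X_one_mul_pderiv_add_X_two_mul_pderiv_quartic R)
  obtain rfl : a = 0 := eq_zero_of_mul_pow_eq_zero h_four four_mul_pow
  have hb : 4 * b ^ 3 = 0 := by simpa [pderiv_one_quartic] using hy
  have hc : 4 * c ^ 3 = 0 := by simpa [pderiv_two_quartic] using hz
  exact ⟨rfl, eq_zero_of_mul_pow_eq_zero h_four hb, eq_zero_of_mul_pow_eq_zero h_four hc⟩

theorem stmt_4 (a b c : ℂ)
    (hf : eval ![a, b, c] f = 0)
    (hx : eval ![a, b, c] (pderiv 0 f) = 0)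
    (hy : eval ![a, b, c] (pderiv 1 f) = 0)
    (hz : eval ![a, b, c] (pderiv 2 f) = 0) :
    a = 0 ∧ b = 0 ∧ c = 0 :=
  stmt_4_general (mem_nonZeroDivisors_of_ne_zero two_ne_zero) a b c hf hy hz
end
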